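/- There exists an absolute constant c_3 > 0 with the following property. Let c_0 > 0 and let g be an arithmetic function with g(p) ≥ c_0 for every prime p. Then for every s ∈ ℕ, Π_{p ≤ s} (1 + ((1 + 1/p)^s − 1)/g(p)) ≤ (1 + 1/c_0)^s · exp(s·log log(s+2) + c_3·s), where the product runs over primes p ≤ s. -/

import Mathlib

/-!
Since `1 + x ≤ exp x`, each factor is at most `(1 + 1/c₀) * exp (s / p)`, so the product is at most
`(1 + 1/c₀) ^ π(s) * exp (s * ∑ 1/p)`. The upper half of Mertens' second theorem,
`∑_{p ≤ n} 1/p ≤ log log n + O(1)`, then gives the claim. It follows by Abel summation from the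
upper half of the first, `∑_{p ≤ n} log p / p ≤ log n + log 4`, which comes from comparing
`∏ p ^ ⌊n/p⌋ ∣ n!` with `n! ≤ n ^ n`; replacing `⌊n/p⌋` by `n/p` costs `θ(n) ≤ n log 4`.
-/

open Finset Real

theorem div_le_factorization_factorial {p : ℕ} (hp : p.Prime) (n : ℕ) :
    n / p ≤ n.factorial.factorization p :=
  calc n / p ≤ (p * (n / p)).factorial.factorization p := by
        rw [Nat.factorization_factorial_mul hp]
        exact Nat.le_add_left _ _
    _ ≤ n.factorial.factorization p :=
        (Nat.factorization_le_iff_dvd (Nat.factorial_ne_zero _) (Nat.factorial_ne_zero _)).2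
          (Nat.factorial_dvd_factorial (Nat.mul_div_le n p)) p

theorem sum_primesLE_div_mul_log_le_log_factorial (n : ℕ) :
    ∑ p ∈ n.primesLE, ((n / p : ℕ) : ℝ) * log p ≤ log n.factorial := by
  have support_subset : n.factorial.factorization.support ⊆ n.primesLE := fun p hp ↦
    have hp' := Nat.prime_of_mem_primeFactors hp
    Nat.mem_primesLE.2 ⟨hp'.dvd_factorial.1 (Nat.dvd_of_mem_primeFactors hp), hp'⟩
  rw [log_nat_eq_sum_factorization,
    Finsupp.sum_of_support_subset _ support_subset _ (fun _ _ ↦ by simp)]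
  gcongr with p hp
  exact div_le_factorization_factorial (Nat.prime_of_mem_primesLE hp) n

theorem log_factorial_le_mul_log (n : ℕ) : log n.factorial ≤ n * log n := by
  rw [← log_pow]
  exact log_le_log (mod_cast n.factorial_pos) (mod_cast n.factorial_le_pow)

theorem sum_primesLE_log_div_le {n : ℕ} (hn : n ≠ 0) :
    ∑ p ∈ n.primesLE, log p / p ≤ log n + log 4 := by
  have hn_pos : (0 : ℝ) < n := mod_cast hn.pos
  refine le_of_mul_le_mul_left ?_ hn_pos
  calc n * ∑ p ∈ n.primesLE, log p / p
      = ∑ p ∈ n.primesLE, (n / p : ℝ) * log p := by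
        rw [mul_sum]
        exact sum_congr rfl fun _ _ ↦ by ring
    _ ≤ ∑ p ∈ n.primesLE, (((n / p : ℕ) : ℝ) + 1) * log p := by
        gcongr with p
        rw [← Nat.floor_div_eq_div (K := ℝ)]
        exact (Nat.lt_floor_add_one _).le
    _ = ∑ p ∈ n.primesLE, ((n / p : ℕ) : ℝ) * log p + Chebyshev.theta n := by
        simp only [add_mul, one_mul, sum_add_distrib, Chebyshev.theta_eq_sum_primesLE_log]
    _ ≤ n * log n + log 4 * n := add_le_add
        ((sum_primesLE_div_mul_log_le_log_factorial n).trans (log_factorial_le_mul_log n))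
        (Chebyshev.theta_le_log4_mul_x hn_pos.le)
    _ = n * (log n + log 4) := by ring

theorem mul_one_div_sub_one_div_le {x y A C : ℝ} (hx : 0 < x) (hxy : x ≤ y) (hA : A ≤ x + C) :
    A * (1 / x - 1 / y) ≤ log y - log x + C * (1 / x - 1 / y) := by
  have hy : 0 < y := hx.trans_le hxy
  have one_sub_div_le : 1 - x / y ≤ log y - log x := by
    rw [← log_div hy.ne' hx.ne', ← inv_div y x]
    exact one_sub_inv_le_log_of_pos (div_pos hy hx)
  calc A * (1 / x - 1 / y) ≤ (x + C) * (1 / x - 1 / y) :=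
        mul_le_mul_of_nonneg_right hA (sub_nonneg.2 (one_div_le_one_div_of_le hx hxy))
    _ = 1 - x / y + C * (1 / x - 1 / y) := by field_simp
    _ ≤ log y - log x + C * (1 / x - 1 / y) := by gcongr

section AbelSummation

variable {a L : ℕ → ℝ} {m n : ℕ} {C : ℝ}

theorem sum_Icc_div_le_sum_div_add (hmn : m ≤ n) (hLm : 0 < L m) (hL : MonotoneOn L (Set.Ici m))
    (ha : ∀ k ≥ m, ∑ j ∈ Icc m k, a j ≤ L k + C) :
    ∑ j ∈ Icc m n, a j / L j ≤
      (∑ j ∈ Icc m n, a j) / L n + (log (L n) - log (L m)) + C * (1 / L m - 1 / L n) := by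
  induction n, hmn using Nat.le_induction with
  | base => simp
  | succ k hmk ih =>
    have hLk : 0 < L k := hLm.trans_le (hL Set.self_mem_Ici hmk hmk)
    have abel_step := mul_one_div_sub_one_div_le hLk
      (hL hmk (Nat.le_succ_of_le hmk) k.le_succ) (ha k hmk)
    rw [sum_Icc_succ_top (by omega), sum_Icc_succ_top (by omega), add_div]
    linear_combination ih + abel_step

theorem sum_Icc_div_le_log_add (hmn : m ≤ n) (hLm : 0 < L m) (hL : MonotoneOn L (Set.Ici m))
    (ha : ∀ k ≥ m, ∑ j ∈ Icc m k, a j ≤ L k + C) :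
    ∑ j ∈ Icc m n, a j / L j ≤ log (L n) + (1 + C / L m - log (L m)) := by
  have hLn : 0 < L n := hLm.trans_le (hL Set.self_mem_Ici hmn hmn)
  have sum_div_le : (∑ j ∈ Icc m n, a j) / L n ≤ 1 + C / L n := by
    rw [← div_self hLn.ne', ← add_div]
    exact div_le_div_of_nonneg_right (ha n hmn) hLn.le
  linear_combination sum_Icc_div_le_sum_div_add hmn hLm hL ha + sum_div_le

end AbelSummation

theorem sum_primesLE_one_div_le {n : ℕ} (hn : 2 ≤ n) :
    ∑ p ∈ n.primesLE, 1 / (p : ℝ) ≤ log (log n) + (3 - log (log 2)) := by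
  have log_two_pos : 0 < log 2 := log_pos one_lt_two
  have log_four_div : log 4 / log 2 = 2 := by
    rw [show (4 : ℝ) = 2 ^ 2 by norm_num, log_pow]
    field_simp
    norm_num
  have log_mono : MonotoneOn (fun k : ℕ ↦ log k) (Set.Ici 2) := fun j hj k _ hjk ↦
    log_le_log (mod_cast two_pos.trans_le hj) (mod_cast hjk)
  have mertens_first (k : ℕ) (hk : k ≥ 2) :
      ∑ p ∈ Icc 2 k, (if p.Prime then log p / p else 0) ≤ log k + log 4 := by
    rw [← sum_filter, ← Nat.primesLE_eq_filter_Icc_two]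
    exact sum_primesLE_log_div_le (by omega)
  calc ∑ p ∈ n.primesLE, 1 / (p : ℝ)
      = ∑ p ∈ Icc 2 n, (if p.Prime then log p / p else 0) / log p := by
        rw [Nat.primesLE_eq_filter_Icc_two, sum_filter]
        refine sum_congr rfl fun p hp ↦ ?_
        have : log p ≠ 0 := (log_pos (mod_cast (mem_Icc.1 hp).1)).ne'
        split_ifs
        · field_simp
        · simp
    _ ≤ log (log n) + (1 + log 4 / log (2 : ℕ) - log (log (2 : ℕ))) :=
        sum_Icc_div_le_log_add hn (mod_cast log_two_pos) log_mono mertens_first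
    _ = log (log n) + (3 - log (log 2)) := by
        rw [Nat.cast_ofNat, log_four_div]
        ring

theorem one_add_pow_sub_one_div_le {x b c : ℝ} (hx : 0 ≤ x) (hc : 0 < c) (hcb : c ≤ b) (k : ℕ) :
    1 + ((1 + x) ^ k - 1) / b ≤ (1 + 1 / c) * exp (k * x) := by
  have one_le : 1 ≤ (1 + x) ^ k := one_le_pow₀ (by linarith)
  calc 1 + ((1 + x) ^ k - 1) / b ≤ 1 + ((1 + x) ^ k - 1) / c := by gcongr
    _ ≤ (1 + x) ^ k + (1 + x) ^ k / c := by gcongr; linarith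
    _ = (1 + 1 / c) * (1 + x) ^ k := by ring
    _ ≤ (1 + 1 / c) * exp (k * x) := by
        rw [exp_nat_mul]
        gcongr
        linarith [add_one_le_exp x]

theorem prod_one_add_pow_sub_one_div_le {ι : Type*} (P : Finset ι) {x g : ι → ℝ} {c : ℝ}
    (hx : ∀ i ∈ P, 0 ≤ x i) (hc : 0 < c) (hg : ∀ i ∈ P, c ≤ g i) (k : ℕ) :
    ∏ i ∈ P, (1 + ((1 + x i) ^ k - 1) / g i) ≤ (1 + 1 / c) ^ #P * exp (k * ∑ i ∈ P, x i) := by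
  rw [mul_sum, exp_sum, ← prod_const, ← prod_mul_distrib]
  refine prod_le_prod (fun i hi ↦ ?_)
    fun i hi ↦ one_add_pow_sub_one_div_le (hx i hi) hc (hg i hi) k
  have one_le : 1 ≤ (1 + x i) ^ k := one_le_pow₀ (by linarith [hx i hi])
  have := div_nonneg (sub_nonneg.2 one_le) (hc.le.trans (hg i hi))
  positivity

/-- There is an absolute constant `c₃ > 0` such that if `g(p) ≥ c₀ > 0` for every prime `p`,
then for every `s ∈ ℕ`,
`∏_{p ≤ s} (1 + ((1 + 1/p)^s - 1)/g(p)) ≤ (1 + 1/c₀)^s exp(s log log(s+2) + c₃ s)`. -/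
theorem prod_small_primes_le_exp :
    ∃ c₃ : ℝ, 0 < c₃ ∧ ∀ c₀ : ℝ, 0 < c₀ → ∀ g : ℕ → ℝ, (∀ p : ℕ, p.Prime → c₀ ≤ g p) →
      ∀ s : ℕ, 0 < s →
        ∏ p ∈ (Finset.range (s + 1)).filter Nat.Prime,
            (1 + ((1 + 1 / (p : ℝ)) ^ s - 1) / g p) ≤
          (1 + 1 / c₀) ^ s * Real.exp (s * Real.log (Real.log (s + 2)) + c₃ * s) := by
  have log_log_two_neg : log (log 2) < 0 :=
    log_neg (log_pos one_lt_two) (by linarith [log_two_lt_d9])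
  refine ⟨3 - log (log 2), by linarith, fun c₀ hc₀ g hg s _ ↦ ?_⟩
  have card_le : #s.primesLE ≤ s := by
    simpa [Nat.primesLE_eq_filter_Icc_one] using card_filter_le (Icc 1 s) Nat.Prime
  have sum_le : ∑ p ∈ s.primesLE, 1 / (p : ℝ) ≤ log (log (s + 2)) + (3 - log (log 2)) :=
    calc ∑ p ∈ s.primesLE, 1 / (p : ℝ) ≤ ∑ p ∈ (s + 2).primesLE, 1 / (p : ℝ) :=
          sum_le_sum_of_subset_of_nonneg (Nat.primesLE_mono (by omega)) fun _ _ _ ↦ by positivity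
      _ ≤ log (log (s + 2)) + (3 - log (log 2)) :=
          mod_cast sum_primesLE_one_div_le (n := s + 2) (by omega)
  rw [← Nat.primesLE_eq_filter_range]
  calc ∏ p ∈ s.primesLE, (1 + ((1 + 1 / (p : ℝ)) ^ s - 1) / g p)
      ≤ (1 + 1 / c₀) ^ #s.primesLE * exp (s * ∑ p ∈ s.primesLE, 1 / (p : ℝ)) :=
        prod_one_add_pow_sub_one_div_le _ (fun _ _ ↦ by positivity) hc₀
          (fun p hp ↦ hg p (Nat.prime_of_mem_primesLE hp)) s
    _ ≤ (1 + 1 / c₀) ^ s * exp (s * (log (log (s + 2)) + (3 - log (log 2)))) := by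
        gcongr
        exact le_add_of_nonneg_right (by positivity)
    _ = (1 + 1 / c₀) ^ s * exp (s * log (log (s + 2)) + (3 - log (log 2)) * s) := by ring_nf
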